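/- Let a ≥ 3 be an integer, d = a²−4, ε = (a+√d)/2, U = [[a,−1],[1,0]], A = [[1,1],[ε⁻¹,ε]]. For t ∈ ℝ define τ_t = (U·A·diag(e^{t/2}, e^{−t/2})) · i via the Möbius action on the upper half plane. Then for t_n = ln(ε^n) = n·ln ε, one has τ_{t_n} = (T_{n+1}(a) + i√d)/T_n(a). -/

import Mathlib

open Complex

/-- The normalized Chebyshev polynomial of the first kind (indexed by `ℤ`),
characterized by `T n (X + X⁻¹) = X ^ n + X ^ (-n)`. -/
noncomputable def chebT (n : ℤ) (x : ℝ) : ℝ :=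
  2 * (Polynomial.Chebyshev.T ℝ n).eval (x / 2)

/-- Möbius action of a real 2×2 matrix `[[p,q],[r,s]]` on `τ`: `(pτ+q)/(rτ+s)`. -/
noncomputable def moebius (M : Matrix (Fin 2) (Fin 2) ℝ) (τ : ℂ) : ℂ :=
  ((M 0 0 : ℂ) * τ + (M 0 1 : ℂ)) / ((M 1 0 : ℂ) * τ + (M 1 1 : ℂ))

/-!
Write `a = 2 cosh x` with `x ≥ 0`; then `√d = 2 sinh x` and `ε = exp x`. The columns of `A` are
eigenvectors of `U` with eigenvalues `exp x` and `exp (-x)`, so `U` translates the geodesic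
`t ↦ A · diag(exp (t / 2), exp (-t / 2)) · i` by `2 x`. Hence
`τ t = (2 cosh (t + x) + 2 i sinh x) / (2 cosh t)` for every `t`, and at `t = n x` the two
hyperbolic cosines are values of Chebyshev polynomials at `a`.
-/

theorem chebT_two_mul_cosh (n : ℤ) (x : ℝ) :
    chebT n (2 * Real.cosh x) = 2 * Real.cosh (n * x) := by
  rw [chebT, mul_div_cancel_left₀ _ two_ne_zero, Polynomial.Chebyshev.T_real_cosh]

theorem moebius_I (M : Matrix (Fin 2) (Fin 2) ℝ) :
    moebius M I =
      (((M 0 0 * M 1 0 + M 0 1 * M 1 1 : ℝ) : ℂ) + I * (M.det : ℂ)) /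
        ((M 1 0 ^ 2 + M 1 1 ^ 2 : ℝ) : ℂ) := by
  have normSq_denom : normSq (M 1 0 * I + M 1 1) = M 1 0 ^ 2 + M 1 1 ^ 2 := by
    rw [add_comm, normSq_add_mul_I, add_comm]
  have num_mul_conj : (M 0 0 * I + M 0 1) * (starRingEnd ℂ) (M 1 0 * I + M 1 1) =
      ((M 0 0 * M 1 0 + M 0 1 * M 1 1 : ℝ) : ℂ) + I * (M.det : ℂ) := by
    simp only [M.det_fin_two, map_add, map_mul, conj_I, conj_ofReal]
    push_cast
    linear_combination (-(M 0 0 : ℂ) * M 1 0) * I_sq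
  rw [moebius, div_eq_mul_inv, inv_def, normSq_denom, ← mul_assoc, num_mul_conj, ofReal_inv,
    ← div_eq_mul_inv]

/-- The diagonal one-parameter group whose orbit of `i` is the geodesic from `0` to `∞`; the
halved exponents make `t` the hyperbolic arc length. -/
noncomputable def geodesicFlow (t : ℝ) : Matrix (Fin 2) (Fin 2) ℝ :=
  !![Real.exp (t / 2), 0; 0, Real.exp (-t / 2)]

theorem geodesicFlow_add (s t : ℝ) : geodesicFlow (s + t) = geodesicFlow s * geodesicFlow t := by
  simp [geodesicFlow, ← Real.exp_add, add_div, add_comm]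

/-- The matrix `A` of the theorem for `ε = exp x`. Its columns are eigenvectors of
`!![2 * cosh x, -1; 1, 0]`, with eigenvalues `exp x` and `exp (-x)`. -/
noncomputable def eigenvectorMatrix (x : ℝ) : Matrix (Fin 2) (Fin 2) ℝ :=
  !![1, 1; Real.exp (-x), Real.exp x]

theorem companion_mul_eigenvectorMatrix (x : ℝ) :
    !![2 * Real.cosh x, -1; 1, 0] * eigenvectorMatrix x =
      eigenvectorMatrix x * geodesicFlow (2 * x) := by
  have exp_neg_half : -(2 * x) / 2 = -x := by ring
  simp [eigenvectorMatrix, geodesicFlow, exp_neg_half, ← Real.exp_add, Real.cosh_eq,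
    mul_div_cancel₀]

theorem eigenvectorMatrix_mul_geodesicFlow (x t : ℝ) :
    eigenvectorMatrix x * geodesicFlow t =
      !![Real.exp (t / 2), Real.exp (-t / 2);
        Real.exp (-x + t / 2), Real.exp (x + -t / 2)] := by
  simp [eigenvectorMatrix, geodesicFlow, Real.exp_add]

theorem moebius_eigenvectorMatrix_mul_geodesicFlow_I (x t : ℝ) :
    moebius (eigenvectorMatrix x * geodesicFlow t) I =
      (((2 * Real.cosh (t - x) : ℝ) : ℂ) + I * ((2 * Real.sinh x : ℝ) : ℂ)) /
        ((2 * Real.cosh (t - 2 * x) : ℝ) : ℂ) := by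
  rw [moebius_I, eigenvectorMatrix_mul_geodesicFlow, Matrix.det_fin_two_of]
  simp only [Matrix.of_apply, Matrix.cons_val', Matrix.cons_val_zero, Matrix.cons_val_one,
    Matrix.cons_val_fin_one, ← Real.exp_add, ← Real.exp_nat_mul, Real.cosh_eq, Real.sinh_eq]
  push_cast
  ring_nf

theorem moebius_companion_mul_eigenvectorMatrix_mul_geodesicFlow_I (x t : ℝ) :
    moebius (!![2 * Real.cosh x, -1; 1, 0] * eigenvectorMatrix x * geodesicFlow t) I =
      (((2 * Real.cosh (t + x) : ℝ) : ℂ) + I * ((2 * Real.sinh x : ℝ) : ℂ)) /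
        ((2 * Real.cosh t : ℝ) : ℂ) := by
  have numerator_arg : 2 * x + t - x = t + x := by ring
  rw [companion_mul_eigenvectorMatrix, mul_assoc, ← geodesicFlow_add,
    moebius_eigenvectorMatrix_mul_geodesicFlow_I, numerator_arg, add_sub_cancel_left]

theorem sqrt_two_mul_cosh_sq_sub_four {x : ℝ} (hx : 0 ≤ x) :
    √((2 * Real.cosh x) ^ 2 - 4) = 2 * Real.sinh x := by
  have sq_eq : (2 * Real.cosh x) ^ 2 - 4 = (2 * Real.sinh x) ^ 2 := by
    rw [mul_pow, Real.cosh_sq]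
    ring
  rw [sq_eq, Real.sqrt_sq (mul_nonneg zero_le_two (Real.sinh_nonneg_iff.mpr hx))]

theorem exists_nonneg_two_mul_cosh_eq {a : ℝ} (ha : 2 ≤ a) : ∃ x, 0 ≤ x ∧ 2 * Real.cosh x = a := by
  have one_le_half : 1 ≤ a / 2 := by linarith
  refine ⟨Real.arcosh (a / 2), Real.arcosh_nonneg one_le_half, ?_⟩
  rw [Real.cosh_arcosh one_le_half, mul_div_cancel₀ _ two_ne_zero]

theorem geodesic_discretization_general (a : ℝ) (ha : 2 ≤ a) (d : ℝ) (hd : d = a ^ 2 - 4)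
    (ε : ℝ) (hε : ε = (a + Real.sqrt d) / 2)
    (U A : Matrix (Fin 2) (Fin 2) ℝ)
    (hU : U = !![a, -1; 1, 0]) (hA : A = !![1, 1; ε⁻¹, ε])
    (τ : ℝ → ℂ)
    (hτ : ∀ t : ℝ, τ t = moebius (U * A * !![Real.exp (t / 2), 0; 0, Real.exp (-t / 2)])
      Complex.I)
    (n : ℤ) :
    τ (n * Real.log ε) =
      ((chebT (n + 1) a : ℂ) + Complex.I * (Real.sqrt d : ℂ)) / (chebT n a : ℂ) := by
  obtain ⟨x, hx, rfl⟩ := exists_nonneg_two_mul_cosh_eq ha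
  have hsqrt : √d = 2 * Real.sinh x := by rw [hd, sqrt_two_mul_cosh_sq_sub_four hx]
  have hexp : ε = Real.exp x := by
    rw [hε, hsqrt, ← mul_add, Real.cosh_add_sinh, mul_div_cancel_left₀ _ two_ne_zero]
  have hA' : A = eigenvectorMatrix x := by rw [hA, hexp, ← Real.exp_neg, eigenvectorMatrix]
  rw [hτ, hU, hA', ← geodesicFlow, moebius_companion_mul_eigenvectorMatrix_mul_geodesicFlow_I,
    hexp, Real.log_exp, hsqrt, chebT_two_mul_cosh, chebT_two_mul_cosh, Int.cast_add, Int.cast_one,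
    add_one_mul]

theorem geodesic_discretization (a : ℤ) (ha : 3 ≤ a) (d : ℝ) (hd : d = (a : ℝ) ^ 2 - 4)
    (ε : ℝ) (hε : ε = ((a : ℝ) + Real.sqrt d) / 2)
    (U A : Matrix (Fin 2) (Fin 2) ℝ)
    (hU : U = !![(a : ℝ), -1; 1, 0]) (hA : A = !![1, 1; ε⁻¹, ε])
    (τ : ℝ → ℂ)
    (hτ : ∀ t : ℝ, τ t = moebius (U * A * !![Real.exp (t / 2), 0; 0, Real.exp (-t / 2)])
      Complex.I)
    (n : ℤ) :
    τ (n * Real.log ε) =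
      ((chebT (n + 1) (a : ℝ) : ℂ) + Complex.I * (Real.sqrt d : ℂ)) / (chebT n (a : ℝ) : ℂ) := by
  exact geodesic_discretization_general a (by exact_mod_cast (by lia : 2 ≤ a)) d hd ε hε U A hU hA
    τ hτ n
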